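/- Let n ≥ 2 and m ≥ 1 be integers and R > 0. Let F : ℝ → ℝ be infinitely differentiable on a neighborhood of R. Suppose that for every integer l with 0 ≤ l ≤ m−1 both ((d/ds)^l (Q_m F))(R) = 0 and (𝒟_m^{∘l} F)(R) = 0, where 𝒟_m^{∘l} denotes the l-fold composition of 𝒟_m (with 𝒟_m^{∘0} F = F). Then F^{(k)}(R) = 0 for every integer k with 0 ≤ k ≤ 2m−1. -/

import Mathlib

/-- The second-order operator `𝒟_k f (s) = f''(s) + (n-1)·coth(s)·f'(s)
    - (k(k+n-2)/sinh²(s))·f(s)`. -/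
noncomputable def Dop (n k : ℤ) (f : ℝ → ℝ) : ℝ → ℝ := fun s =>
  deriv (deriv f) s + ((n : ℝ) - 1) * (Real.cosh s / Real.sinh s) * deriv f s
    - ((k : ℝ) * ((k : ℝ) + (n : ℝ) - 2) / (Real.sinh s) ^ 2) * f s

/-- The first-order operator `Γ_k f (s) = f'(s) + (n+k-2)·coth(s)·f(s)`. -/
noncomputable def Gop (n k : ℤ) (f : ℝ → ℝ) : ℝ → ℝ := fun s =>
  deriv f s + ((n : ℝ) + (k : ℝ) - 2) * (Real.cosh s / Real.sinh s) * f s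

/-- `Q_m = Γ_1 ∘ Γ_2 ∘ ⋯ ∘ Γ_m` (with `Γ_m` applied first). -/
noncomputable def Qop (n : ℤ) : ℕ → (ℝ → ℝ) → (ℝ → ℝ)
  | 0 => id
  | m + 1 => fun f => Qop n m (Gop n ((m : ℤ) + 1) f)

/-!
Besides `Γ_k`, which lowers the index of `𝒟_k`, consider the raising operator
`L_k f = f' - k coth · f`. With `μ = k (n + k - 1)` one has `𝒟_{k+1} = L_k Γ_{k+1} + μ` and
`𝒟_k = Γ_{k+1} L_k + μ`, whence `Γ_{k+1} 𝒟_{k+1} = 𝒟_k Γ_{k+1}`. Induct on `m`, passing from `F` to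
`Γ_m F`; the hypotheses that survive are that `Q_m F` vanishes to order `p + m` at `R` and that
`L_{m+p-1} ⋯ L_m` maps every `𝒟_m^l F` with `l < m` to a function vanishing at `R`, and they force
`F` to vanish to order `p + 2 m`. Knowing the order of `Γ_m F` determines that of `F` up to a
multiple of `sinh^{-(n+m-2)}`, which spans the kernel of `Γ_m`. This multiple is zero because
`L_{m+p-1} ⋯ L_m` sends the kernel element, up to sign, to a combination of monomials in `coth` and
`1 / sinh` with positive coefficients. All of this happens in the ring of formal power series at
`R`.
-/

namespace RadialLadder

open PowerSeries

/-! ### Ladder operators in a differential algebra -/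

section DifferentialAlgebra

variable {K A : Type*} [CommRing K] [CommRing A] [Algebra K A] (D : Derivation K A A) (c u : A)

/-- The operator `f ↦ f' + a c f`, of which both `Γ_k` and the raising operators are instances. -/
noncomputable def firstOrder (a : K) : A →ₗ[K] A :=
  D + a • LinearMap.mulLeft K c

/-- The operator `f ↦ f'' + e c f' - q u² f`, of which `𝒟_k` is an instance. -/
noncomputable def secondOrder (e q : K) : A →ₗ[K] A :=
  (D : A →ₗ[K] A) ∘ₗ D + e • LinearMap.mulLeft K c ∘ₗ D - q • LinearMap.mulLeft K (u ^ 2)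

/-- `Γ_k` with the dimension `n` replaced by an arbitrary scalar `ν`. -/
noncomputable def lowering (ν k : K) : A →ₗ[K] A :=
  firstOrder D c (ν + k - 2)

/-- `L_k = d/ds - k coth`. -/
noncomputable def raising (k : K) : A →ₗ[K] A :=
  firstOrder D c (-k)

/-- `𝒟_k` with the dimension `n` replaced by an arbitrary scalar `ν`. -/
noncomputable def radial (ν k : K) : A →ₗ[K] A :=
  secondOrder D c u (ν - 1) (k * (k + ν - 2))

/-- `Q_m = Γ_1 ∘ ⋯ ∘ Γ_m`. -/
noncomputable def lowerings (ν : K) : ℕ → A →ₗ[K] A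
  | 0 => LinearMap.id
  | m + 1 => lowerings ν m ∘ₗ lowering D c ν (m + 1)

/-- `L_{k+p-1} ∘ ⋯ ∘ L_k`. -/
noncomputable def raisings : ℕ → K → A →ₗ[K] A
  | 0, _ => LinearMap.id
  | p + 1, k => raisings p (k + 1) ∘ₗ raising D c k

/-- The relations satisfied by `c = coth` and `u = 1 / sinh`. -/
structure IsCothCsch : Prop where
  deriv_coth : D c = -u ^ 2
  deriv_csch : D u = -(c * u)
  coth_sq : c ^ 2 = u ^ 2 + 1

variable {D c u}

lemma firstOrder_apply (a : K) (f : A) : firstOrder D c a f = D f + a • (c * f) := rfl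

lemma secondOrder_apply (e q : K) (f : A) :
    secondOrder D c u e q f = D (D f) + e • (c * D f) - q • (u ^ 2 * f) := rfl

lemma firstOrder_firstOrder (h : IsCothCsch D c u) (a b : K) (f : A) :
    firstOrder D c a (firstOrder D c b f) =
      secondOrder D c u (a + b) (b * (1 - a)) f + (a * b) • f := by
  simp only [firstOrder_apply, secondOrder_apply, map_add, D.map_smul, D.leibniz, smul_eq_mul,
    h.deriv_coth]
  simp only [Algebra.smul_def, map_add, map_mul, map_sub, map_one]
  linear_combination algebraMap K A a * algebraMap K A b * f * h.coth_sq

lemma radial_add_one_eq_raising_lowering (h : IsCothCsch D c u) (ν k : K) (f : A) :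
    radial D c u ν (k + 1) f =
      raising D c k (lowering D c ν (k + 1) f) + (k * (ν + k - 1)) • f := by
  have hfirst : -k + (ν + (k + 1) - 2) = ν - 1 := by ring
  have hzeroth : (ν + (k + 1) - 2) * (1 - -k) = (k + 1) * (k + 1 + ν - 2) := by ring
  have hremainder : -k * (ν + (k + 1) - 2) + k * (ν + k - 1) = 0 := by ring
  rw [raising, lowering, radial, firstOrder_firstOrder h, add_assoc (secondOrder _ _ _ _ _ _),
    ← add_smul, hfirst, hzeroth, hremainder, zero_smul, add_zero]

lemma radial_eq_lowering_raising (h : IsCothCsch D c u) (ν k : K) (f : A) :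
    radial D c u ν k f = lowering D c ν (k + 1) (raising D c k f) + (k * (ν + k - 1)) • f := by
  have hfirst : ν + (k + 1) - 2 + -k = ν - 1 := by ring
  have hzeroth : -k * (1 - (ν + (k + 1) - 2)) = k * (k + ν - 2) := by ring
  have hremainder : (ν + (k + 1) - 2) * -k + k * (ν + k - 1) = 0 := by ring
  rw [raising, lowering, radial, firstOrder_firstOrder h, add_assoc (secondOrder _ _ _ _ _ _),
    ← add_smul, hfirst, hzeroth, hremainder, zero_smul, add_zero]

-- The two factorisations have the same remainder `μ`, so `Γ (L Γ + μ) = (Γ L + μ) Γ`.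
lemma semiconj_lowering_radial (h : IsCothCsch D c u) (ν k : K) :
    Function.Semiconj (lowering D c ν (k + 1)) (radial D c u ν (k + 1)) (radial D c u ν k) := by
  intro f
  rw [radial_add_one_eq_raising_lowering h, radial_eq_lowering_raising h ν k, map_add, map_smul]

lemma raising_iterate_radial_lowering (h : IsCothCsch D c u) (ν k : K) (l : ℕ) (f : A) :
    raising D c k ((radial D c u ν k)^[l] (lowering D c ν (k + 1) f)) =
      (radial D c u ν (k + 1))^[l + 1] f -
        (k * (ν + k - 1)) • (radial D c u ν (k + 1))^[l] f := by
  rw [← (semiconj_lowering_radial h ν k).iterate_right l, Function.iterate_succ_apply',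
    radial_add_one_eq_raising_lowering h, add_sub_cancel_right]

lemma derivation_pow_of_eq_neg_mul (hu : D u = -(c * u)) (b : ℕ) :
    D (u ^ b) = -(b * c * u ^ b) := by
  rcases b with _ | b
  · simp
  · rw [D.leibniz_pow, hu, nsmul_eq_mul, smul_eq_mul, Nat.add_sub_cancel]
    ring

lemma firstOrder_natCast_pow (hu : D u = -(c * u)) (b : ℕ) :
    firstOrder D c (b : K) (u ^ b) = 0 := by
  rw [firstOrder_apply, derivation_pow_of_eq_neg_mul hu, Algebra.smul_def, map_natCast]
  ring

-- At `i = 0` the truncated exponent `i - 1` comes with the coefficient `0`.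
lemma neg_raising_monomial (h : IsCothCsch D c u) (k : K) (i b : ℕ) :
    -raising D c k (c ^ i * u ^ b) =
      (b + k) • (c ^ (i + 1) * u ^ b) + (i : K) • (c ^ (i - 1) * u ^ (b + 2)) := by
  simp only [raising, firstOrder_apply, D.leibniz, D.leibniz_pow c,
    derivation_pow_of_eq_neg_mul h.deriv_csch, h.deriv_coth, smul_eq_mul, nsmul_eq_mul,
    Algebra.smul_def (R := K), map_add, map_neg, map_natCast]
  ring

end DifferentialAlgebra

/-! ### Positive combinations of monomials in `coth` and `csch` -/

section Cone

variable {K A : Type*} [Field K] [LinearOrder K] [CommRing A] [Algebra K A]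
  {D : Derivation K A A} {c u : A}

variable (K c u) in
/-- The positive combinations of the monomials `c ^ i * u ^ b` of degree `i + b = d`. Recording the
degree determines the sign at points where `c` and `u` are both negative. -/
def monomialCone (d : ℕ) : ConvexCone K A :=
  ConvexCone.hull K {f | ∃ i b : ℕ, i + b = d ∧ c ^ i * u ^ b = f}

lemma monomial_mem_monomialCone {i b d : ℕ} (h : i + b = d) :
    c ^ i * u ^ b ∈ monomialCone K c u d :=
  ConvexCone.subset_hull ⟨i, b, h, rfl⟩

variable [IsStrictOrderedRing K]

lemma neg_raising_mem_monomialCone (h : IsCothCsch D c u) {k : K} (hk : 0 < k) {d : ℕ} {f : A}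
    (hf : f ∈ monomialCone K c u d) : -raising D c k f ∈ monomialCone K c u (d + 1) := by
  suffices monomialCone K c u d ≤ (monomialCone K c u (d + 1)).comap (-raising D c k) from this hf
  refine ConvexCone.hull_min ?_
  rintro _ ⟨i, b, rfl, rfl⟩
  change -raising D c k _ ∈ monomialCone K c u _
  have hlead : ((b : K) + k) • (c ^ (i + 1) * u ^ b) ∈ monomialCone K c u (i + b + 1) :=
    ConvexCone.smul_mem _ (by positivity) (monomial_mem_monomialCone (by omega))
  rw [neg_raising_monomial h]
  rcases i with _ | i
  · simpa using hlead
  · exact ConvexCone.add_mem _ hlead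
      (ConvexCone.smul_mem _ (by positivity) (monomial_mem_monomialCone (by omega)))

lemma eval_ne_zero_of_mem_monomialCone (ε : A →ₐ[K] K) (hpos : 0 < ε c * ε u) {d : ℕ} {f : A}
    (hf : f ∈ monomialCone K c u d) : ε f ≠ 0 := by
  suffices monomialCone K c u d ≤
      (ConvexCone.strictlyPositive K K).comap (ε u ^ d • ε.toLinearMap) from
    right_ne_zero_of_mul (show 0 < ε u ^ d * ε f from this hf).ne'
  refine ConvexCone.hull_min ?_
  rintro _ ⟨i, b, rfl, rfl⟩
  have hu : 0 < ε u ^ 2 := by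
    have := right_ne_zero_of_mul hpos.ne'
    positivity
  change 0 < ε u ^ (i + b) * ε (c ^ i * u ^ b)
  calc 0 < (ε c * ε u) ^ i * (ε u ^ 2) ^ b := by positivity
    _ = ε u ^ (i + b) * ε (c ^ i * u ^ b) := by rw [map_mul, map_pow, map_pow]; ring

lemma eval_raisings_ne_zero (h : IsCothCsch D c u) (ε : A →ₐ[K] K) (hpos : 0 < ε c * ε u) (p : ℕ)
    {k : K} (hk : 0 < k) {d : ℕ} {f : A} (hf : f ∈ monomialCone K c u d) :
    ε (raisings D c p k f) ≠ 0 := by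
  induction p generalizing k d f with
  | zero => exact eval_ne_zero_of_mem_monomialCone ε hpos hf
  | succ p ih =>
    have := ih (by positivity : 0 < k + 1) (neg_raising_mem_monomialCone h hk hf)
    rwa [map_neg, map_neg, neg_ne_zero] at this

end Cone

/-! ### Orders of vanishing of formal power series -/

section Order

lemma X_pow_dvd_derivative {K : Type*} [CommSemiring K] {q : ℕ} {f : K⟦X⟧} (h : X ^ (q + 1) ∣ f) :
    X ^ q ∣ d⁄dX K f := by
  rw [X_pow_dvd_iff] at h ⊢
  intro i hi
  rw [coeff_derivative, h (i + 1) (by omega), zero_mul]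

lemma X_pow_succ_dvd_of_derivative {K : Type*} [CommSemiring K] [NoZeroDivisors K] [CharZero K]
    {q : ℕ} {f : K⟦X⟧} (h0 : constantCoeff f = 0) (h : X ^ q ∣ d⁄dX K f) : X ^ (q + 1) ∣ f := by
  rw [X_pow_dvd_iff] at h ⊢
  rintro (_ | i) hi
  · simpa using h0
  · have hi' := h i (by omega)
    rw [coeff_derivative] at hi'
    exact (mul_eq_zero.mp hi').resolve_right (by exact_mod_cast i.succ_ne_zero)

section CommRing

variable {K : Type*} [CommRing K] {c : K⟦X⟧}

lemma X_pow_dvd_firstOrder (a : K) {q : ℕ} {f : K⟦X⟧} (h : X ^ (q + 1) ∣ f) :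
    X ^ q ∣ firstOrder (d⁄dX K) c a f := by
  rw [firstOrder_apply]
  exact dvd_add (X_pow_dvd_derivative h)
    (dvd_smul_of_dvd a (((pow_dvd_pow X q.le_succ).trans h).mul_left c))

lemma X_pow_dvd_raisings (p q : ℕ) (k : K) {f : K⟦X⟧} (h : X ^ (p + q) ∣ f) :
    X ^ q ∣ raisings (d⁄dX K) c p k f := by
  induction p generalizing k f with
  | zero => simpa [raisings] using h
  | succ p ih => exact ih (k + 1) (X_pow_dvd_firstOrder _ (by rwa [Nat.add_right_comm] at h))

lemma X_pow_succ_dvd_of_firstOrder [NoZeroDivisors K] [CharZero K] {a : K} {q : ℕ} {f : K⟦X⟧}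
    (h0 : constantCoeff f = 0) (h : X ^ q ∣ firstOrder (d⁄dX K) c a f) : X ^ (q + 1) ∣ f := by
  induction q with
  | zero => simpa [X_dvd_iff] using h0
  | succ q ih =>
    have hf : X ^ (q + 1) ∣ f := ih ((pow_dvd_pow X q.le_succ).trans h)
    refine X_pow_succ_dvd_of_derivative h0 ?_
    rw [eq_sub_of_add_eq (firstOrder_apply a f).symm]
    exact dvd_sub h (dvd_smul_of_dvd a (hf.mul_left c))

end CommRing

lemma exists_X_pow_succ_dvd_sub_smul {K : Type*} [Field K] [CharZero K] {c w : K⟦X⟧} {a : K}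
    (hw : firstOrder (d⁄dX K) c a w = 0) (hw0 : constantCoeff w ≠ 0) {q : ℕ} {f : K⟦X⟧}
    (h : X ^ q ∣ firstOrder (d⁄dX K) c a f) : ∃ r : K, X ^ (q + 1) ∣ f - r • w := by
  refine ⟨constantCoeff f / constantCoeff w, X_pow_succ_dvd_of_firstOrder (c := c) (a := a) ?_ ?_⟩
  · rw [map_sub, constantCoeff_smul, smul_eq_mul, div_mul_cancel₀ _ hw0, sub_self]
  · rwa [map_sub, map_smul, hw, smul_zero, sub_zero]

end Order

section Formal

variable {K : Type*} [Field K] [LinearOrder K] [IsStrictOrderedRing K] {c u : K⟦X⟧}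

-- Modulo `X ^ (p + q + 1)`, `f` is a multiple of the kernel element `u ^ (N + j)` of `Γ_{j+1}`,
-- which `L_{j+p} ∘ ⋯ ∘ L_{j+1}` does not annihilate at the base point.
lemma X_pow_succ_dvd_of_lowering_of_raisings (h : IsCothCsch (d⁄dX K) c u)
    (hpos : 0 < constantCoeff c * constantCoeff u) {N j p q : ℕ} {f : K⟦X⟧}
    (hf : X ^ (p + q) ∣ lowering (d⁄dX K) c (N + 1 : K) (j + 1) f)
    (hf0 : constantCoeff (raisings (d⁄dX K) c p (j + 1 : K) f) = 0) : X ^ (p + q + 1) ∣ f := by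
  have hw : u ^ (N + j) ∈ monomialCone K c u (N + j) := by
    simpa using monomial_mem_monomialCone (K := K) (c := c) (u := u) (zero_add (N + j))
  have hu : constantCoeff u ≠ 0 := right_ne_zero_of_mul hpos.ne'
  have hindex : (N + 1 : K) + (j + 1) - 2 = (N + j : ℕ) := by push_cast; ring
  rw [lowering, hindex] at hf
  obtain ⟨r, hr⟩ := exists_X_pow_succ_dvd_sub_smul (firstOrder_natCast_pow h.deriv_csch (N + j))
    (by rw [map_pow]; exact pow_ne_zero _ hu) hf
  have hw0 : constantCoeff (raisings (d⁄dX K) c p (j + 1 : K) (u ^ (N + j))) ≠ 0 :=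
    eval_raisings_ne_zero h (AlgHom.mk' constantCoeff fun r f ↦ constantCoeff_smul f r) hpos p
      (by positivity) hw
  have hr0 : r = 0 := by
    have hdvd := X_pow_dvd_raisings (c := c) p 1 (j + 1 : K)
      ((pow_dvd_pow X (by omega : p + 1 ≤ p + q + 1)).trans hr)
    rw [pow_one, X_dvd_iff, map_sub, map_smul, map_sub, constantCoeff_smul, hf0, zero_sub,
      neg_eq_zero, smul_eq_mul] at hdvd
    exact (mul_eq_zero.mp hdvd).resolve_right hw0
  simpa [hr0] using hr

theorem X_pow_dvd_of_lowerings_of_raisings_radial (h : IsCothCsch (d⁄dX K) c u)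
    (hpos : 0 < constantCoeff c * constantCoeff u) {N : ℕ} (m p : ℕ) {f : K⟦X⟧}
    (hlow : X ^ (p + m) ∣ lowerings (d⁄dX K) c (N + 1 : K) m f)
    (hrad : ∀ l < m, constantCoeff
      (raisings (d⁄dX K) c p (m : K) ((radial (d⁄dX K) c u (N + 1 : K) m)^[l] f)) = 0) :
    X ^ (p + 2 * m) ∣ f := by
  induction m generalizing p f with
  | zero => simpa [lowerings] using hlow
  | succ j ih =>
    push_cast at hrad
    have hΓ : X ^ (p + 1 + 2 * j) ∣ lowering (d⁄dX K) c (N + 1 : K) (j + 1) f := by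
      refine ih (p + 1) (by rwa [Nat.add_right_comm]) fun l hl ↦ ?_
      rw [raisings, LinearMap.comp_apply, raising_iterate_radial_lowering h, map_sub, map_sub,
        map_smul, constantCoeff_smul, hrad (l + 1) (by omega), hrad l (by omega), smul_zero,
        sub_zero]
    have := X_pow_succ_dvd_of_lowering_of_raisings h hpos (q := 1 + 2 * j)
      (by rwa [← add_assoc]) (hrad 0 j.succ_pos)
    rwa [show p + (1 + 2 * j) + 1 = p + 2 * (j + 1) by ring] at this

end Formal

/-! ### Taylor series -/

section TaylorSeries

open scoped ContDiff

variable {𝕜 : Type*} [NontriviallyNormedField 𝕜]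

/-- The formal Taylor series of `f` at `x`. -/
noncomputable def taylorSeries (x : 𝕜) (f : 𝕜 → 𝕜) : 𝕜⟦X⟧ :=
  .mk fun k ↦ iteratedDeriv k f x / k.factorial

variable {x : 𝕜} {f g : 𝕜 → 𝕜}

lemma constantCoeff_taylorSeries : constantCoeff (taylorSeries x f) = f x := by
  rw [← coeff_zero_eq_constantCoeff_apply, taylorSeries, coeff_mk]
  simp

lemma taylorSeries_congr (h : f =ᶠ[nhds x] g) : taylorSeries x f = taylorSeries x g := by
  ext k
  rw [taylorSeries, taylorSeries, coeff_mk, coeff_mk, h.iteratedDeriv_eq]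

lemma taylorSeries_add (hf : ContDiffAt 𝕜 ∞ f x) (hg : ContDiffAt 𝕜 ∞ g x) :
    taylorSeries x (f + g) = taylorSeries x f + taylorSeries x g := by
  ext k
  have hk : (k : WithTop ℕ∞) ≤ ∞ := mod_cast le_top
  simp only [taylorSeries, coeff_mk, map_add, iteratedDeriv_add (hf.of_le hk) (hg.of_le hk),
    add_div]

lemma taylorSeries_smul (a : 𝕜) : taylorSeries x (a • f) = a • taylorSeries x f := by
  ext k
  simp only [taylorSeries, coeff_mk, coeff_smul, iteratedDeriv_const_smul_field, smul_eq_mul,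
    mul_div_assoc]

lemma taylorSeries_neg : taylorSeries x (-f) = -taylorSeries x f := by
  rw [← neg_one_smul 𝕜, taylorSeries_smul, neg_one_smul]

lemma taylorSeries_one : taylorSeries x (1 : 𝕜 → 𝕜) = 1 := by
  ext k
  rw [taylorSeries, coeff_mk, Pi.one_def, iteratedDeriv_const, coeff_one]
  split_ifs with hk <;> simp [hk]

section CharZero

variable [CharZero 𝕜]

lemma taylorSeries_mul (hf : ContDiffAt 𝕜 ∞ f x) (hg : ContDiffAt 𝕜 ∞ g x) :
    taylorSeries x (f * g) = taylorSeries x f * taylorSeries x g := by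
  ext k
  have hk : (k : WithTop ℕ∞) ≤ ∞ := mod_cast le_top
  rw [coeff_mul, Finset.Nat.sum_antidiagonal_eq_sum_range_succ_mk]
  simp only [taylorSeries, coeff_mk]
  rw [iteratedDeriv_mul (hf.of_le hk) (hg.of_le hk), Finset.sum_div]
  refine Finset.sum_congr rfl fun i hi ↦ ?_
  have hfactorial (j : ℕ) : (j.factorial : 𝕜) ≠ 0 := mod_cast j.factorial_ne_zero
  rw [Nat.cast_choose 𝕜 (Finset.mem_range_succ_iff.mp hi)]
  field_simp [hfactorial]

lemma taylorSeries_deriv : taylorSeries x (deriv f) = d⁄dX 𝕜 (taylorSeries x f) := by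
  ext k
  rw [coeff_derivative, taylorSeries, taylorSeries, coeff_mk, coeff_mk, iteratedDeriv_succ',
    Nat.factorial_succ]
  have hfactorial : (k.factorial : 𝕜) ≠ 0 := mod_cast k.factorial_ne_zero
  have hsucc : (k : 𝕜) + 1 ≠ 0 := mod_cast k.succ_ne_zero
  push_cast
  field_simp

lemma X_pow_dvd_taylorSeries_iff {q : ℕ} :
    X ^ q ∣ taylorSeries x f ↔ ∀ i < q, iteratedDeriv i f x = 0 := by
  simp [X_pow_dvd_iff, taylorSeries, Nat.factorial_ne_zero]

end CharZero

end TaylorSeries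

section Hyperbolic

open scoped ContDiff

/-- The hyperbolic cotangent, with the junk value `0` at `0`. -/
noncomputable def coth : ℝ → ℝ := Real.cosh / Real.sinh

/-- The hyperbolic cosecant, with the junk value `0` at `0`. -/
noncomputable def csch : ℝ → ℝ := Real.sinh⁻¹

variable {R : ℝ}

lemma contDiffAt_coth (hR : R ≠ 0) : ContDiffAt ℝ ∞ coth R :=
  Real.contDiff_cosh.contDiffAt.div Real.contDiff_sinh.contDiffAt (Real.sinh_ne_zero.mpr hR)

lemma contDiffAt_csch (hR : R ≠ 0) : ContDiffAt ℝ ∞ csch R :=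
  Real.contDiff_sinh.contDiffAt.inv (Real.sinh_ne_zero.mpr hR)

lemma deriv_coth (hR : R ≠ 0) : deriv coth R = -csch R ^ 2 := by
  have hsinh : Real.sinh R ≠ 0 := Real.sinh_ne_zero.mpr hR
  rw [coth, deriv_div Real.differentiableAt_cosh Real.differentiableAt_sinh hsinh,
    Real.deriv_cosh, Real.deriv_sinh, csch, Pi.inv_apply]
  field_simp
  linear_combination -Real.cosh_sq R

lemma deriv_csch (hR : R ≠ 0) : deriv csch R = -(coth R * csch R) := by
  have hsinh : Real.sinh R ≠ 0 := Real.sinh_ne_zero.mpr hR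
  rw [csch, deriv_inv'' Real.differentiableAt_sinh hsinh, Real.deriv_sinh, coth, Pi.div_apply,
    Pi.inv_apply]
  field_simp

lemma coth_sq (hR : R ≠ 0) : coth R ^ 2 = csch R ^ 2 + 1 := by
  have hsinh : Real.sinh R ≠ 0 := Real.sinh_ne_zero.mpr hR
  rw [coth, csch, Pi.div_apply, Pi.inv_apply]
  field_simp
  linear_combination Real.cosh_sq R

lemma coth_mul_csch_pos (hR : R ≠ 0) : 0 < coth R * csch R := by
  calc 0 < Real.cosh R / Real.sinh R ^ 2 :=
        div_pos (Real.cosh_pos R) (sq_pos_of_ne_zero (Real.sinh_ne_zero.mpr hR))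
    _ = coth R * csch R := by rw [coth, csch, Pi.div_apply, Pi.inv_apply]; ring

lemma isCothCsch_taylorSeries (hR : R ≠ 0) :
    IsCothCsch (d⁄dX ℝ) (taylorSeries R coth) (taylorSeries R csch) := by
  have hcoth := contDiffAt_coth hR
  have hcsch := contDiffAt_csch hR
  have hne : ∀ᶠ s in nhds R, s ≠ 0 := eventually_ne_nhds hR
  constructor
  · rw [← taylorSeries_deriv, sq, ← taylorSeries_mul hcsch hcsch, ← taylorSeries_neg]
    refine taylorSeries_congr (hne.mono fun s hs ↦ ?_)
    simp [deriv_coth hs, sq]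
  · rw [← taylorSeries_deriv, ← taylorSeries_mul hcoth hcsch, ← taylorSeries_neg]
    exact taylorSeries_congr (hne.mono fun s hs ↦ deriv_csch hs)
  · rw [sq, sq, ← taylorSeries_mul hcoth hcoth, ← taylorSeries_mul hcsch hcsch,
      ← taylorSeries_one (x := R), 
      ← taylorSeries_add (f := csch * csch) (g := 1) (hcsch.mul hcsch) contDiffAt_const]
    refine taylorSeries_congr (hne.mono fun s hs ↦ ?_)
    simpa [sq] using coth_sq hs

end Hyperbolic

section Operators

open scoped ContDiff

variable {R : ℝ} {f : ℝ → ℝ}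

lemma contDiffAt_deriv (hf : ContDiffAt ℝ ∞ f R) : ContDiffAt ℝ ∞ (deriv f) R :=
  ContDiffAt.derivWithin hf (by simp)

lemma Gop_eq (n k : ℤ) : Gop n k f = deriv f + ((n : ℝ) + k - 2) • (coth * f) := by
  funext s
  simp [Gop, coth, mul_assoc]

lemma contDiffAt_Gop (hR : R ≠ 0) (n k : ℤ) (hf : ContDiffAt ℝ ∞ f R) :
    ContDiffAt ℝ ∞ (Gop n k f) R := by
  have hcf : ContDiffAt ℝ ∞ (coth * f) R := (contDiffAt_coth hR).mul hf
  rw [Gop_eq]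
  exact (contDiffAt_deriv hf).add (contDiffAt_const.smul hcf)

lemma taylorSeries_Gop (hR : R ≠ 0) (n k : ℤ) (hf : ContDiffAt ℝ ∞ f R) :
    taylorSeries R (Gop n k f) =
      lowering (d⁄dX ℝ) (taylorSeries R coth) (n : ℝ) k (taylorSeries R f) := by
  have hcf : ContDiffAt ℝ ∞ (((n : ℝ) + k - 2) • (coth * f)) R :=
    contDiffAt_const.smul ((contDiffAt_coth hR).mul hf)
  rw [Gop_eq, taylorSeries_add (contDiffAt_deriv hf) hcf, taylorSeries_deriv,
    taylorSeries_smul, taylorSeries_mul (contDiffAt_coth hR) hf, lowering, firstOrder_apply]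

lemma taylorSeries_Qop (hR : R ≠ 0) (n : ℤ) (m : ℕ) (hf : ContDiffAt ℝ ∞ f R) :
    taylorSeries R (Qop n m f) =
      lowerings (d⁄dX ℝ) (taylorSeries R coth) (n : ℝ) m (taylorSeries R f) := by
  induction m generalizing f with
  | zero => rfl
  | succ m ih =>
    rw [Qop, ih (contDiffAt_Gop hR _ _ hf), taylorSeries_Gop hR _ _ hf, lowerings,
      LinearMap.comp_apply]
    push_cast
    rfl

lemma Dop_eq (n k : ℤ) : Dop n k f = deriv (deriv f) + ((n : ℝ) - 1) • (coth * deriv f) +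
    (-(k * (k + n - 2) : ℝ)) • (csch * csch * f) := by
  funext s
  simp only [Dop, coth, csch, Pi.add_apply, Pi.smul_apply, Pi.mul_apply, Pi.div_apply,
    Pi.inv_apply, smul_eq_mul]
  ring

lemma contDiffAt_Dop (hR : R ≠ 0) (n k : ℤ) (hf : ContDiffAt ℝ ∞ f R) :
    ContDiffAt ℝ ∞ (Dop n k f) R := by
  have hf' := contDiffAt_deriv hf
  have hcsch := contDiffAt_csch hR
  rw [Dop_eq]
  exact ((contDiffAt_deriv hf').add
    (contDiffAt_const.smul ((contDiffAt_coth hR).mul hf'))).add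
      (contDiffAt_const.smul ((hcsch.mul hcsch).mul hf))

lemma taylorSeries_Dop (hR : R ≠ 0) (n k : ℤ) (hf : ContDiffAt ℝ ∞ f R) :
    taylorSeries R (Dop n k f) =
      radial (d⁄dX ℝ) (taylorSeries R coth) (taylorSeries R csch) (n : ℝ) k
        (taylorSeries R f) := by
  have hf' := contDiffAt_deriv hf
  have hf'' := contDiffAt_deriv hf'
  have hcoth := contDiffAt_coth hR
  have hcsch := contDiffAt_csch hR
  have hfirst : ContDiffAt ℝ ∞ (((n : ℝ) - 1) • (coth * deriv f)) R :=
    contDiffAt_const.smul (hcoth.mul hf')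
  have hsq : ContDiffAt ℝ ∞ (csch * csch) R := hcsch.mul hcsch
  have hzeroth : ContDiffAt ℝ ∞ ((-(k * (k + n - 2) : ℝ)) • (csch * csch * f)) R :=
    contDiffAt_const.smul (hsq.mul hf)
  have hlead : ContDiffAt ℝ ∞ (deriv (deriv f) + ((n : ℝ) - 1) • (coth * deriv f)) R :=
    hf''.add hfirst
  rw [Dop_eq, taylorSeries_add hlead hzeroth, taylorSeries_add hf'' hfirst,
    taylorSeries_smul, taylorSeries_smul, taylorSeries_mul hcoth hf', taylorSeries_mul hsq hf,
    taylorSeries_mul hcsch hcsch, taylorSeries_deriv, taylorSeries_deriv, radial,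
    secondOrder_apply, sq, neg_smul, sub_eq_add_neg _ (_ • _)]

lemma taylorSeries_iterate_Dop (hR : R ≠ 0) (n k : ℤ) (l : ℕ) (hf : ContDiffAt ℝ ∞ f R) :
    taylorSeries R ((Dop n k)^[l] f) =
      (radial (d⁄dX ℝ) (taylorSeries R coth) (taylorSeries R csch) (n : ℝ) k)^[l]
        (taylorSeries R f) := by
  induction l generalizing f with
  | zero => rfl
  | succ l ih =>
    rw [Function.iterate_succ_apply, Function.iterate_succ_apply, ih (contDiffAt_Dop hR _ _ hf),
      taylorSeries_Dop hR _ _ hf]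

end Operators

end RadialLadder

open PowerSeries RadialLadder in
theorem stmt_5_general (n : ℤ) (hn : 1 ≤ n) (m : ℕ) (R : ℝ) (hR : R ≠ 0)
    (F : ℝ → ℝ) (hF : ContDiffAt ℝ (⊤ : ℕ∞) F R)
    (h1 : ∀ l : ℕ, l < m → iteratedDeriv l (Qop n m F) R = 0)
    (h2 : ∀ l : ℕ, l < m → (Dop n (m : ℤ))^[l] F R = 0) :
    ∀ k : ℕ, k < 2 * m → iteratedDeriv k F R = 0 := by
  obtain ⟨N, rfl⟩ : ∃ N : ℕ, n = N + 1 := ⟨(n - 1).toNat, by omega⟩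
  have hpos : 0 < constantCoeff (taylorSeries R coth) *
      constantCoeff (taylorSeries R csch) := by
    simpa only [constantCoeff_taylorSeries] using coth_mul_csch_pos hR
  have hlow : X ^ (0 + m) ∣
      lowerings (d⁄dX ℝ) (taylorSeries R coth) (N + 1 : ℝ) m (taylorSeries R F) := by
    have hQ := taylorSeries_Qop hR (N + 1) m hF
    push_cast at hQ
    rwa [← hQ, zero_add, X_pow_dvd_taylorSeries_iff]
  have hrad (l : ℕ) (hl : l < m) : constantCoeff (raisings (d⁄dX ℝ) (taylorSeries R coth) 0 (m : ℝ)
      ((radial (d⁄dX ℝ) (taylorSeries R coth) (taylorSeries R csch) (N + 1 : ℝ) m)^[l]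
        (taylorSeries R F))) = 0 := by
    have hD := taylorSeries_iterate_Dop hR (N + 1) m l hF
    push_cast at hD
    rw [raisings, LinearMap.id_apply, ← hD, constantCoeff_taylorSeries, h2 l hl]
  have := X_pow_dvd_of_lowerings_of_raisings_radial (isCothCsch_taylorSeries hR) hpos m 0 hlow hrad
  rwa [zero_add, X_pow_dvd_taylorSeries_iff] at this

/-- Lemma `L:Ind`: if `(d/ds)^l (Q_m F) (R) = 0` and `𝒟_m^l F (R) = 0` for
    `l = 0, …, m-1`, then `F^{(k)}(R) = 0` for `k = 0, …, 2m-1`. -/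
theorem stmt_5 (n : ℤ) (hn : 2 ≤ n) (m : ℕ) (hm : 1 ≤ m) (R : ℝ) (hR : 0 < R)
    (F : ℝ → ℝ) (hF : ContDiffAt ℝ (⊤ : ℕ∞) F R)
    (h1 : ∀ l : ℕ, l < m → iteratedDeriv l (Qop n m F) R = 0)
    (h2 : ∀ l : ℕ, l < m → (Dop n (m : ℤ))^[l] F R = 0) :
    ∀ k : ℕ, k < 2 * m → iteratedDeriv k F R = 0 :=
  stmt_5_general n (by omega) m R hR.ne' F hF h1 h2
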